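/- arXiv:2308.08858 — 3 statements merged into one kernel-verified Lean document; each statement's English description precedes it below -/
import Mathlib

section
/- For any step h ∈ [H] and any episode j ∈ [K], the run of Algorithm 1 satisfies Σ_{k=1}^K (1/ň_h^k) Σ_{i=1}^{ň_h^k} 1{j = ℓ̌_{h,i}^k} ≤ 1 + 1/H. -/
open Finset MeasureTheory

namespace ZSMG

/-! ## Stage structure of the stage-based algorithm -/

/-- Stage lengths (`0`-indexed): `stageLen H 0 = e₁ = H` and
`stageLen H (i+1) = ⌊(1 + 1/H) * stageLen H i⌋`. -/
def stageLen (H : ℕ) : ℕ → ℕ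
  | 0 => H
  | i + 1 => stageLen H i + stageLen H i / H

/-- Total number of visits contained in the first `m` stages. -/
def stageEnd (H m : ℕ) : ℕ := ∑ i ∈ Finset.range m, stageLen H i

/-- `n` is the ending index of some stage (the set `𝓛` of the paper). -/
def IsStageEnd (H n : ℕ) : Prop := ∃ m : ℕ, n = stageEnd H (m + 1)

/-- Index (0-based) of the stage containing the `(n+1)`-st visit,
where `n` is the number of previous visits. -/
noncomputable def curStage (H n : ℕ) : ℕ := sInf {m | n < stageEnd H (m + 1)}

/-- `ň`: the number of visits in the stage immediately preceding the current stage. -/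
noncomputable def checkCnt (H n : ℕ) : ℕ :=
  if curStage H n = 0 then 0 else stageLen H (curStage H n - 1)

/-- `n`: the number of visits in all completed stages. -/
noncomputable def globCnt (H n : ℕ) : ℕ := stageEnd H (curStage H n)

/-- a probability vector on the finite type `α`. -/
def IsProbVec {α : Type*} [Fintype α] (p : α → ℝ) : Prop :=
  (∀ i, 0 ≤ p i) ∧ ∑ i, p i = 1

/-! ## Visit counting along a trajectory -/

section Counts

variable {S A B : Type*} [DecidableEq S] [DecidableEq A] [DecidableEq B]

/-- `N_h^k(s,a,b)`: the number of visits to `y = (s,a,b)` at step `h`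
before episode `k`. -/
def Nvis (x : ℕ → ℕ → S × A × B) (h k : ℕ) (y : S × A × B) : ℕ :=
  ((Finset.Ico 1 k).filter fun j => x j h = y).card

/-- `n_h^k(s)`: the number of visits to the state `s` at step `h` before episode `k`. -/
def NvisS {σ : Type*} [DecidableEq σ] (st : ℕ → ℕ → σ) (h k : ℕ) (s : σ) : ℕ :=
  ((Finset.Ico 1 k).filter fun j => st j h = s).card

/-- the episode of the `i`-th (1-based) visit to `y` at step `h`. -/
noncomputable def visitEp (x : ℕ → ℕ → S × A × B) (h : ℕ) (y : S × A × B) (i : ℕ) : ℕ :=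
  sInf {j | x j h = y ∧ Nvis x h j y = i - 1}

/-- `n_h^k` for the triple visited at step `h` of episode `k`. -/
noncomputable def nGlob (x : ℕ → ℕ → S × A × B) (H h k : ℕ) : ℕ :=
  globCnt H (Nvis x h k (x k h))

/-- `ň_h^k` for the triple visited at step `h` of episode `k`. -/
noncomputable def nCheck (x : ℕ → ℕ → S × A × B) (H h k : ℕ) : ℕ :=
  checkCnt H (Nvis x h k (x k h))

/-- `ℓ_{h,i}^k`: the episode of the `i`-th visit (among all episodes) to the triple
visited at step `h` of episode `k`. -/
noncomputable def ell (x : ℕ → ℕ → S × A × B) (h k i : ℕ) : ℕ := visitEp x h (x k h) i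

/-- `ℓ̌_{h,i}^k` relative to an arbitrary triple `y`. -/
noncomputable def ellCheckAt (x : ℕ → ℕ → S × A × B) (H h k : ℕ) (y : S × A × B) (i : ℕ) : ℕ :=
  visitEp x h y (stageEnd H (curStage H (Nvis x h k y) - 1) + i)

/-- `ℓ̌_{h,i}^k`: the episode of the `i`-th visit, in the stage immediately preceding the
current stage, to the triple visited at step `h` of episode `k`. -/
noncomputable def ellCheck (x : ℕ → ℕ → S × A × B) (H h k i : ℕ) : ℕ :=
  ellCheckAt x H h k (x k h) i

end Counts

/-! ## Values of Markov games -/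

section Game

variable {S A B : Type*} [Fintype S] [Fintype A] [Fintype B]

/-- `Pm h s a b` is a transition probability vector for every `(h,s,a,b)`. -/
def IsTransKernel (Pm : ℕ → S → A → B → S → ℝ) : Prop := ∀ h s a b, IsProbVec (Pm h s a b)

/-- `𝕍(p, f) = pᵀ (f²) - (pᵀ f)²`. -/
def Vvar (p f : S → ℝ) : ℝ := (∑ s, p s * f s ^ 2) - (∑ s, p s * f s) ^ 2

/-- `(P_h f)(s,a,b) = E_{s' ~ P_h(·|s,a,b)} [f s']`. -/
def Pexp (Pm : ℕ → S → A → B → S → ℝ) (h : ℕ) (s : S) (a : A) (b : B) (f : S → ℝ) : ℝ :=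
  ∑ s', Pm h s a b s' * f s'

/-- coarse correlated equilibrium of the pair of matrices `(Qu, Ql)`. -/
def IsCCE (pi Qu Ql : A → B → ℝ) : Prop :=
  IsProbVec (fun ab : A × B => pi ab.1 ab.2) ∧
  (∀ a' : A, ∑ a, ∑ b, pi a b * Qu a' b ≤ ∑ a, ∑ b, pi a b * Qu a b) ∧
  (∀ b' : B, ∑ a, ∑ b, pi a b * Ql a b ≤ ∑ a, ∑ b, pi a b * Ql a b')

/-- value of the correlated Markov policy `pol` with `t` steps remaining
(so at step `H - t + 1`). -/
noncomputable def VpiAux (H : ℕ) (Pm : ℕ → S → A → B → S → ℝ) (r : ℕ → S → A → B → ℝ)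
    (pol : ℕ → S → A → B → ℝ) : ℕ → S → ℝ
  | 0, _ => 0
  | t + 1, s => ∑ a, ∑ b, pol (H - t) s a b *
      (r (H - t) s a b + ∑ s', Pm (H - t) s a b s' * VpiAux H Pm r pol t s')

/-- `V_h^π(s)` for a correlated Markov policy `π`. -/
noncomputable def Vpi (H : ℕ) (Pm : ℕ → S → A → B → S → ℝ) (r : ℕ → S → A → B → ℝ)
    (pol : ℕ → S → A → B → ℝ) (h : ℕ) (s : S) : ℝ := VpiAux H Pm r pol (H + 1 - h) s

/-- `Q_h^π(s,a,b)` for a correlated Markov policy `π`. -/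
noncomputable def Qpi (H : ℕ) (Pm : ℕ → S → A → B → S → ℝ) (r : ℕ → S → A → B → ℝ)
    (pol : ℕ → S → A → B → ℝ) (h : ℕ) (s : S) (a : A) (b : B) : ℝ :=
  r h s a b + ∑ s', Pm h s a b s' * Vpi H Pm r pol (h + 1) s'

/-- Nash value with `t` steps remaining. -/
noncomputable def VstarAux (H : ℕ) (Pm : ℕ → S → A → B → S → ℝ)
    (r : ℕ → S → A → B → ℝ) : ℕ → S → ℝ
  | 0, _ => 0
  | t + 1, s =>
      ⨆ p ∈ {p : A → ℝ | IsProbVec p}, ⨅ q ∈ {q : B → ℝ | IsProbVec q},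
        ∑ a, ∑ b, p a * q b *
          (r (H - t) s a b + ∑ s', Pm (H - t) s a b s' * VstarAux H Pm r t s')

/-- `V_h^*`: the Nash equilibrium value function. -/
noncomputable def Vstar (H : ℕ) (Pm : ℕ → S → A → B → S → ℝ) (r : ℕ → S → A → B → ℝ)
    (h : ℕ) (s : S) : ℝ := VstarAux H Pm r (H + 1 - h) s

/-- `Q_h^*`: the Nash equilibrium action-value function. -/
noncomputable def Qstar (H : ℕ) (Pm : ℕ → S → A → B → S → ℝ) (r : ℕ → S → A → B → ℝ)
    (h : ℕ) (s : S) (a : A) (b : B) : ℝ :=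
  r h s a b + ∑ s', Pm h s a b s' * Vstar H Pm r (h + 1) s'

/-- value of a pair of general (history-dependent) policies, with `t` steps remaining;
the history is the reversed list of the previously visited `(s,a,b)` triples. -/
noncomputable def VgenAux (H : ℕ) (Pm : ℕ → S → A → B → S → ℝ) (r : ℕ → S → A → B → ℝ)
    (mu : List (S × A × B) → S → A → ℝ) (nu : List (S × A × B) → S → B → ℝ) :
    ℕ → List (S × A × B) → S → ℝ
  | 0, _, _ => 0
  | t + 1, hist, s => ∑ a, ∑ b, mu hist s a * nu hist s b *
      (r (H - t) s a b + ∑ s', Pm (H - t) s a b s' * VgenAux H Pm r mu nu t ((s, a, b) :: hist) s')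

/-- `V₁^{μ,ν}(s)` for general policies `μ, ν`. -/
noncomputable def Vgen (H : ℕ) (Pm : ℕ → S → A → B → S → ℝ) (r : ℕ → S → A → B → ℝ)
    (mu : List (S × A × B) → S → A → ℝ) (nu : List (S × A × B) → S → B → ℝ) (s : S) : ℝ :=
  VgenAux H Pm r mu nu H [] s

/-- `V₁^{†,ν}(s) = sup_μ V₁^{μ,ν}(s)`: value of the best response against `ν`. -/
noncomputable def VdagNu (H : ℕ) (Pm : ℕ → S → A → B → S → ℝ) (r : ℕ → S → A → B → ℝ)
    (nu : List (S × A × B) → S → B → ℝ) (s : S) : ℝ :=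
  ⨆ mu ∈ {mu : List (S × A × B) → S → A → ℝ | ∀ hist s', IsProbVec (mu hist s')},
    Vgen H Pm r mu nu s

/-- `V₁^{μ,†}(s) = inf_ν V₁^{μ,ν}(s)`: value of `μ` against its best response. -/
noncomputable def VmuDag (H : ℕ) (Pm : ℕ → S → A → B → S → ℝ) (r : ℕ → S → A → B → ℝ)
    (mu : List (S × A × B) → S → A → ℝ) (s : S) : ℝ :=
  ⨅ nu ∈ {nu : List (S × A × B) → S → B → ℝ | ∀ hist s', IsProbVec (nu hist s')},
    Vgen H Pm r mu nu s

end Game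

/-! ## The certified policies of Algorithm 2 -/

section Certified

variable {S A B : Type*} [Fintype S] [Fintype A] [Fintype B]
  [DecidableEq S] [DecidableEq A] [DecidableEq B]

/-- Weight placed on episode `k` by the certified-policy construction after observing the
(reversed) history `hist`; `g k h y` is the probability that the policy of episode `k`
takes the relevant player's own action of `y` at step `h`. -/
noncomputable def certW (x : ℕ → ℕ → S × A × B) (H K : ℕ) (g : ℕ → ℕ → S × A × B → ℝ) :
    List (S × A × B) → ℕ → ℝ
  | [], k => if k ∈ Finset.Icc 1 K then (K : ℝ)⁻¹ else 0
  | y :: hist, k' =>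
      (∑ k ∈ Finset.Icc 1 K, certW x H K g hist k * g k (hist.length + 1) y *
          (Nvis x (hist.length + 1) k y : ℝ)⁻¹ *
          (((Finset.Icc 1 (Nvis x (hist.length + 1) k y)).filter
              fun j => ellCheckAt x H (hist.length + 1) k y j = k').card : ℝ)) /
        ∑ k ∈ Finset.Icc 1 K, certW x H K g hist k * g k (hist.length + 1) y

/-- `μ^out`: the certified policy of the max-player (Algorithm 2), as a general policy. -/
noncomputable def certMax (x : ℕ → ℕ → S × A × B) (H K : ℕ)
    (pol : ℕ → ℕ → S → A → B → ℝ) : List (S × A × B) → S → A → ℝ := fun hist s a =>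
  ∑ k ∈ Finset.Icc 1 K,
    certW x H K (fun k' h' y => ∑ b, pol k' h' y.1 y.2.1 b) hist k *
      ∑ b, pol k (hist.length + 1) s a b

/-- `ν^out`: the certified policy of the min-player, as a general policy. -/
noncomputable def certMin (x : ℕ → ℕ → S × A × B) (H K : ℕ)
    (pol : ℕ → ℕ → S → A → B → ℝ) : List (S × A × B) → S → B → ℝ := fun hist s b =>
  ∑ k ∈ Finset.Icc 1 K,
    certW x H K (fun k' h' y => ∑ a, pol k' h' y.1 a y.2.2) hist k *
      ∑ a, pol k (hist.length + 1) s a b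

end Certified

/-! ## Data describing one run of Algorithm 1 -/

/-- All quantities maintained by Algorithm 1 along one run: the trajectory
`(s_h^k, a_h^k, b_h^k)`, the CCE policies `π_h^k`, and the optimistic/pessimistic
(action-)value and reference value functions, each indexed by
(episode, step); the value at episode `k` is the value at the *beginning* of episode `k`. -/
structure RunData (S A B : Type*) where
  st : ℕ → ℕ → S
  aa : ℕ → ℕ → A
  bb : ℕ → ℕ → B
  pol : ℕ → ℕ → S → A → B → ℝ
  Qup : ℕ → ℕ → S → A → B → ℝ
  Qlo : ℕ → ℕ → S → A → B → ℝ
  Vup : ℕ → ℕ → S → ℝ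
  Vlo : ℕ → ℕ → S → ℝ
  VrefUp : ℕ → ℕ → S → ℝ
  VrefLo : ℕ → ℕ → S → ℝ

namespace RunData

variable {S A B : Type*} [DecidableEq S] [DecidableEq A] [DecidableEq B] (R : RunData S A B)

/-- the trajectory of visited triples. -/
def x : ℕ → ℕ → S × A × B := fun k h => (R.st k h, R.aa k h, R.bb k h)

/-- `n_h^k`. -/
noncomputable def n (H h k : ℕ) : ℕ := nGlob R.x H h k

/-- `ň_h^k`. -/
noncomputable def nchk (H h k : ℕ) : ℕ := nCheck R.x H h k

/-- `ℓ_{h,i}^k`. -/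
noncomputable def L (h k i : ℕ) : ℕ := ell R.x h k i

/-- `ℓ̌_{h,i}^k`. -/
noncomputable def Lc (H h k i : ℕ) : ℕ := ellCheck R.x H h k i

/-- `v̌/ň` for the optimistic values. -/
noncomputable def vChkUp (H h k : ℕ) : ℝ :=
  (∑ i ∈ Finset.Icc 1 (R.nchk H h k),
    R.Vup (R.Lc H h k i) (h + 1) (R.st (R.Lc H h k i) (h + 1))) / (R.nchk H h k : ℝ)

/-- `v̌/ň` for the pessimistic values. -/
noncomputable def vChkLo (H h k : ℕ) : ℝ :=
  (∑ i ∈ Finset.Icc 1 (R.nchk H h k),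
    R.Vlo (R.Lc H h k i) (h + 1) (R.st (R.Lc H h k i) (h + 1))) / (R.nchk H h k : ℝ)

/-- `μ̄^ref/n`. -/
noncomputable def refMeanUp (H h k : ℕ) : ℝ :=
  (∑ i ∈ Finset.Icc 1 (R.n H h k),
    R.VrefUp (R.L h k i) (h + 1) (R.st (R.L h k i) (h + 1))) / (R.n H h k : ℝ)

/-- `μ̲^ref/n`. -/
noncomputable def refMeanLo (H h k : ℕ) : ℝ :=
  (∑ i ∈ Finset.Icc 1 (R.n H h k),
    R.VrefLo (R.L h k i) (h + 1) (R.st (R.L h k i) (h + 1))) / (R.n H h k : ℝ)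

/-- `ν̄^{ref} = σ̄^{ref}/n - (μ̄^{ref}/n)²`. -/
noncomputable def nuRefUp (H h k : ℕ) : ℝ :=
  (∑ i ∈ Finset.Icc 1 (R.n H h k),
    R.VrefUp (R.L h k i) (h + 1) (R.st (R.L h k i) (h + 1)) ^ 2) / (R.n H h k : ℝ)
    - R.refMeanUp H h k ^ 2

/-- `ν̲^{ref} = σ̲^{ref}/n - (μ̲^{ref}/n)²`. -/
noncomputable def nuRefLo (H h k : ℕ) : ℝ :=
  (∑ i ∈ Finset.Icc 1 (R.n H h k),
    R.VrefLo (R.L h k i) (h + 1) (R.st (R.L h k i) (h + 1)) ^ 2) / (R.n H h k : ℝ)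
    - R.refMeanLo H h k ^ 2

/-- `μ̌̄/ň`: mean of the optimistic advantages over the previous stage. -/
noncomputable def advMeanUp (H h k : ℕ) : ℝ :=
  (∑ i ∈ Finset.Icc 1 (R.nchk H h k),
    (R.Vup (R.Lc H h k i) (h + 1) (R.st (R.Lc H h k i) (h + 1)) -
     R.VrefUp (R.Lc H h k i) (h + 1) (R.st (R.Lc H h k i) (h + 1)))) / (R.nchk H h k : ℝ)

/-- `μ̲̌/ň`: mean of the pessimistic advantages over the previous stage. -/
noncomputable def advMeanLo (H h k : ℕ) : ℝ :=
  (∑ i ∈ Finset.Icc 1 (R.nchk H h k),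
    (R.Vlo (R.Lc H h k i) (h + 1) (R.st (R.Lc H h k i) (h + 1)) -
     R.VrefLo (R.Lc H h k i) (h + 1) (R.st (R.Lc H h k i) (h + 1)))) / (R.nchk H h k : ℝ)

/-- `ν̌̄ = σ̌̄/ň - (μ̌̄/ň)²`. -/
noncomputable def nuChkUp (H h k : ℕ) : ℝ :=
  (∑ i ∈ Finset.Icc 1 (R.nchk H h k),
    (R.Vup (R.Lc H h k i) (h + 1) (R.st (R.Lc H h k i) (h + 1)) -
     R.VrefUp (R.Lc H h k i) (h + 1) (R.st (R.Lc H h k i) (h + 1))) ^ 2) / (R.nchk H h k : ℝ)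
    - R.advMeanUp H h k ^ 2

/-- `ν̲̌ = σ̲̌/ň - (μ̲̌/ň)²`. -/
noncomputable def nuChkLo (H h k : ℕ) : ℝ :=
  (∑ i ∈ Finset.Icc 1 (R.nchk H h k),
    (R.Vlo (R.Lc H h k i) (h + 1) (R.st (R.Lc H h k i) (h + 1)) -
     R.VrefLo (R.Lc H h k i) (h + 1) (R.st (R.Lc H h k i) (h + 1))) ^ 2) / (R.nchk H h k : ℝ)
    - R.advMeanLo H h k ^ 2

/-- the Hoeffding-type bonus `γ = 2√(H²ι/ň)`. -/
noncomputable def gammaB (H : ℕ) (iota : ℝ) (h k : ℕ) : ℝ :=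
  2 * Real.sqrt ((H : ℝ) ^ 2 * iota / (R.nchk H h k : ℝ))

/-- the optimistic variance-based bonus `β̄`. -/
noncomputable def betaUp (H : ℕ) (iota c1 c2 c3 : ℝ) (h k : ℕ) : ℝ :=
  c1 * Real.sqrt (R.nuRefUp H h k * iota / (R.n H h k : ℝ)) +
  c2 * Real.sqrt (R.nuChkUp H h k * iota / (R.nchk H h k : ℝ)) +
  c3 * ((H : ℝ) * iota / (R.n H h k : ℝ) + (H : ℝ) * iota / (R.nchk H h k : ℝ) +
    (H : ℝ) * iota ^ (3 / 4 : ℝ) / (R.n H h k : ℝ) ^ (3 / 4 : ℝ) +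
    (H : ℝ) * iota ^ (3 / 4 : ℝ) / (R.nchk H h k : ℝ) ^ (3 / 4 : ℝ))

/-- the pessimistic variance-based bonus `β̲`. -/
noncomputable def betaLo (H : ℕ) (iota c1 c2 c3 : ℝ) (h k : ℕ) : ℝ :=
  c1 * Real.sqrt (R.nuRefLo H h k * iota / (R.n H h k : ℝ)) +
  c2 * Real.sqrt (R.nuChkLo H h k * iota / (R.nchk H h k : ℝ)) +
  c3 * ((H : ℝ) * iota / (R.n H h k : ℝ) + (H : ℝ) * iota / (R.nchk H h k : ℝ) +
    (H : ℝ) * iota ^ (3 / 4 : ℝ) / (R.n H h k : ℝ) ^ (3 / 4 : ℝ) +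
    (H : ℝ) * iota ^ (3 / 4 : ℝ) / (R.nchk H h k : ℝ) ^ (3 / 4 : ℝ))

section WithFintype

variable [Fintype S] [Fintype A] [Fintype B]

/-- `ψ_{h+1}^k`. -/
noncomputable def psiTerm (Pm : ℕ → S → A → B → S → ℝ) (H K h k : ℕ) : ℝ :=
  Pexp Pm h (R.st k h) (R.aa k h) (R.bb k h) fun s' =>
    (∑ i ∈ Finset.Icc 1 (R.n H h k),
        (R.VrefUp (R.L h k i) (h + 1) s' - R.VrefLo (R.L h k i) (h + 1) s')) / (R.n H h k : ℝ) -
      (R.VrefUp (K + 1) (h + 1) s' - R.VrefLo (K + 1) (h + 1) s')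

/-- `ξ_{h+1}^k`. -/
noncomputable def xiTerm (Pm : ℕ → S → A → B → S → ℝ) (H h k : ℕ) : ℝ :=
  (∑ i ∈ Finset.Icc 1 (R.nchk H h k),
      (Pexp Pm h (R.st k h) (R.aa k h) (R.bb k h)
          (fun s' => R.Vup (R.Lc H h k i) (h + 1) s' - R.Vlo (R.Lc H h k i) (h + 1) s') -
        (R.Vup (R.Lc H h k i) (h + 1) (R.st (R.Lc H h k i) (h + 1)) -
          R.Vlo (R.Lc H h k i) (h + 1) (R.st (R.Lc H h k i) (h + 1))))) / (R.nchk H h k : ℝ)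

/-- `Λ_{h+1}^k = ψ_{h+1}^k + ξ_{h+1}^k + 2β̄_h^k + 2β̲_h^k`. -/
noncomputable def lamTerm (Pm : ℕ → S → A → B → S → ℝ) (H K : ℕ) (iota c1 c2 c3 : ℝ)
    (h k : ℕ) : ℝ :=
  R.psiTerm Pm H K h k + R.xiTerm Pm H h k +
    2 * R.betaUp H iota c1 c2 c3 h k + 2 * R.betaLo H iota c1 c2 c3 h k

/-- `R` is a run of Algorithm 1 (with parameters `H K r ι c₁ c₂ c₃ N₀`): initialization,
stage-end update rules for the optimistic and pessimistic action-value functions, CCE policy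
and value updates, and the min-gap reference-value update. -/
def Valid (H K : ℕ) (r : ℕ → S → A → B → ℝ) (iota c1 c2 c3 : ℝ) (N0 : ℕ) : Prop :=
  (∀ h, 1 ≤ h → h ≤ H → ∀ s a b,
      R.Qup 1 h s a b = (H : ℝ) - h + 1 ∧ R.Qlo 1 h s a b = 0) ∧
  (∀ h, 1 ≤ h → h ≤ H → ∀ s,
      R.Vup 1 h s = (H : ℝ) - h + 1 ∧ R.Vlo 1 h s = 0 ∧
      R.VrefUp 1 h s = (H : ℝ) ∧ R.VrefLo 1 h s = 0) ∧
  (∀ k s, R.Vup k (H + 1) s = 0 ∧ R.Vlo k (H + 1) s = 0 ∧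
      R.VrefUp k (H + 1) s = 0 ∧ R.VrefLo k (H + 1) s = 0) ∧
  (∀ k h s, IsProbVec fun ab : A × B => R.pol k h s ab.1 ab.2) ∧
  (∀ k, 1 ≤ k → k ≤ K → ∀ h, 1 ≤ h → h ≤ H → ∀ s a b,
    (((s, a, b) = R.x k h ∧ IsStageEnd H (Nvis R.x h (k + 1) (R.x k h))) →
      R.Qup (k + 1) h s a b =
        min (min (r h s a b + R.vChkUp H h k + R.gammaB H iota h k)
              (r h s a b + R.refMeanUp H h k + R.advMeanUp H h k +
                R.betaUp H iota c1 c2 c3 h k))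
          (R.Qup k h s a b) ∧
      R.Qlo (k + 1) h s a b =
        max (max (r h s a b + R.vChkLo H h k - R.gammaB H iota h k)
              (r h s a b + R.refMeanLo H h k + R.advMeanLo H h k -
                R.betaLo H iota c1 c2 c3 h k))
          (R.Qlo k h s a b)) ∧
    (¬((s, a, b) = R.x k h ∧ IsStageEnd H (Nvis R.x h (k + 1) (R.x k h))) →
      R.Qup (k + 1) h s a b = R.Qup k h s a b ∧ R.Qlo (k + 1) h s a b = R.Qlo k h s a b)) ∧
  (∀ k, 1 ≤ k → k ≤ K → ∀ h, 1 ≤ h → h ≤ H → ∀ s,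
    ((s = R.st k h ∧ IsStageEnd H (Nvis R.x h (k + 1) (R.x k h))) →
      IsCCE (fun a b => R.pol (k + 1) h s a b) (fun a b => R.Qup (k + 1) h s a b)
        (fun a b => R.Qlo (k + 1) h s a b) ∧
      R.Vup (k + 1) h s = ∑ a, ∑ b, R.pol (k + 1) h s a b * R.Qup (k + 1) h s a b ∧
      R.Vlo (k + 1) h s = ∑ a, ∑ b, R.pol (k + 1) h s a b * R.Qlo (k + 1) h s a b) ∧
    (¬(s = R.st k h ∧ IsStageEnd H (Nvis R.x h (k + 1) (R.x k h))) →
      R.pol (k + 1) h s = R.pol k h s ∧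
      R.Vup (k + 1) h s = R.Vup k h s ∧ R.Vlo (k + 1) h s = R.Vlo k h s)) ∧
  (∀ k, 1 ≤ k → k ≤ K → ∀ h, 1 ≤ h → h ≤ H → ∀ s,
    ((s = R.st k h ∧ NvisS R.st h (k + 1) s = N0) →
      ∃ j, 1 ≤ j ∧ j ≤ k + 1 ∧
        R.VrefUp (k + 1) h s = R.Vup j h s ∧ R.VrefLo (k + 1) h s = R.Vlo j h s ∧
        ∀ j', 1 ≤ j' → j' ≤ k + 1 →
          R.Vup j h s - R.Vlo j h s ≤ R.Vup j' h s - R.Vlo j' h s) ∧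
    (¬(s = R.st k h ∧ NvisS R.st h (k + 1) s = N0) →
      R.VrefUp (k + 1) h s = R.VrefUp k h s ∧ R.VrefLo (k + 1) h s = R.VrefLo k h s))

end WithFintype

end RunData

/-- The probabilistic structure of a run of Algorithm 1 on the Markov game with transition
kernel `Pm`: with respect to the filtration `F` (indexed by the time `(k-1)*(H+1)+h`), the
trajectory is adapted, the next state is sampled from `P_h(·|s_h^k,a_h^k,b_h^k)`, and the
actions are sampled from the CCE policy `π_h^k`. -/
def SampledRun {S A B : Type*} [Fintype S] [Fintype A] [Fintype B]
    [MeasurableSpace S] [MeasurableSpace A] [MeasurableSpace B]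
    {Ω : Type*} [m0 : MeasurableSpace Ω] (P : Measure Ω)
    (H : ℕ) (Pm : ℕ → S → A → B → S → ℝ)
    (Rv : Ω → RunData S A B) (F : Filtration ℕ m0) : Prop :=
  (∀ k h, 1 ≤ k → 1 ≤ h → h ≤ H + 1 →
      @Measurable Ω S (F ((k - 1) * (H + 1) + h)) _ fun ω => (Rv ω).st k h) ∧
  (∀ k h, 1 ≤ k → 1 ≤ h → h ≤ H →
      (@Measurable Ω A (F ((k - 1) * (H + 1) + h)) _ fun ω => (Rv ω).aa k h) ∧
      (@Measurable Ω B (F ((k - 1) * (H + 1) + h)) _ fun ω => (Rv ω).bb k h)) ∧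
  (∀ k h, 1 ≤ k → 1 ≤ h → h ≤ H → ∀ f : S → ℝ,
      (P[(fun ω => f ((Rv ω).st k (h + 1)))|F ((k - 1) * (H + 1) + h)]) =ᵐ[P]
        fun ω => ∑ s', Pm h ((Rv ω).st k h) ((Rv ω).aa k h) ((Rv ω).bb k h) s' * f s') ∧
  (∀ k h, 1 ≤ k → 1 ≤ h → h ≤ H → ∀ f : A → B → ℝ,
      (P[(fun ω => f ((Rv ω).aa k h) ((Rv ω).bb k h))|F ((k - 1) * (H + 1) + h - 1)]) =ᵐ[P]
        fun ω => ∑ a, ∑ b, (Rv ω).pol k h ((Rv ω).st k h) a b * f a b)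


lemma stageEnd_succ (H m : ℕ) : stageEnd H (m + 1) = stageEnd H m + stageLen H m :=
  Finset.sum_range_succ _ _

lemma le_stageLen (H m : ℕ) : H ≤ stageLen H m := by
  induction m with
  | zero => exact le_rfl
  | succ m ih => exact ih.trans (Nat.le_add_right _ _)

lemma stageEnd_mono (H : ℕ) : Monotone (stageEnd H) :=
  monotone_nat_of_le_succ fun m => by simp [stageEnd_succ]

lemma le_stageEnd {H : ℕ} (hH : 1 ≤ H) (m : ℕ) : m ≤ stageEnd H m := by
  induction m with
  | zero => exact Nat.zero_le _
  | succ m ih =>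
    have := le_stageLen H m
    rw [stageEnd_succ]
    omega

lemma lt_stageEnd_curStage_succ {H : ℕ} (hH : 1 ≤ H) (n : ℕ) :
    n < stageEnd H (curStage H n + 1) :=
  Nat.sInf_mem (s := {m | n < stageEnd H (m + 1)}) ⟨n, le_stageEnd hH (n + 1)⟩

lemma stageEnd_curStage_le (H n : ℕ) : stageEnd H (curStage H n) ≤ n := by
  rcases Nat.eq_zero_or_pos (curStage H n) with h0 | hpos
  · simp [h0, stageEnd]
  · have hnot : ¬ n < stageEnd H (curStage H n - 1 + 1) :=
      Nat.notMem_of_lt_sInf (s := {m | n < stageEnd H (m + 1)}) (Nat.sub_lt hpos one_pos)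
    rwa [Nat.sub_add_cancel hpos, not_lt] at hnot

/-- The stage containing a visit is determined by the bounds on the visit count. -/
lemma curStage_eq {H n m : ℕ} (hH : 1 ≤ H) (h1 : stageEnd H m ≤ n)
    (h2 : n < stageEnd H (m + 1)) : curStage H n = m := by
  refine le_antisymm (Nat.sInf_le h2) (Nat.le_of_lt_succ ?_)
  exact (stageEnd_mono H).reflect_lt (h1.trans_lt (lt_stageEnd_curStage_succ hH n))

lemma stageLen_succ_div_le {H : ℕ} (hH : 1 ≤ H) (m : ℕ) :
    (stageLen H (m + 1) : ℝ) * (stageLen H m : ℝ)⁻¹ ≤ 1 + 1 / (H : ℝ) := by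
  have hL : (0 : ℝ) < stageLen H m := by exact_mod_cast hH.trans (le_stageLen H m)
  have hdiv : ((stageLen H m / H : ℕ) : ℝ) ≤ (stageLen H m : ℝ) / H := Nat.cast_div_le
  rw [← div_eq_mul_inv, div_le_iff₀ hL]
  have hs : (stageLen H (m + 1) : ℝ) = stageLen H m + ((stageLen H m / H : ℕ) : ℝ) := by
    simp [stageLen]
  rw [hs]
  linarith [show (1 + 1 / (H : ℝ)) * stageLen H m = stageLen H m + stageLen H m / H by ring]

section Visits

variable {S A B : Type*} [DecidableEq S] [DecidableEq A] [DecidableEq B]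

lemma Nvis_lt_of_lt (x : ℕ → ℕ → S × A × B) {h k k' : ℕ} {y : S × A × B}
    (hk : 1 ≤ k) (hkk' : k < k') (hy : x k h = y) : Nvis x h k y < Nvis x h k' y := by
  refine Finset.card_lt_card (Finset.ssubset_iff.2 ⟨k, by simp, ?_⟩)
  intro a ha
  simp only [Finset.mem_insert, Finset.mem_filter, Finset.mem_Ico] at ha ⊢
  rcases ha with rfl | ⟨⟨h1, h2⟩, h3⟩
  · exact ⟨⟨hk, hkk'⟩, hy⟩
  · exact ⟨⟨h1, h2.trans hkk'⟩, h3⟩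

lemma Nvis_injOn (x : ℕ → ℕ → S × A × B) (h : ℕ) (y : S × A × B) :
    Set.InjOn (fun k => Nvis x h k y) {k | 1 ≤ k ∧ x k h = y} := by
  rintro k ⟨hk, hky⟩ k' ⟨hk', hky'⟩ heq
  rcases lt_trichotomy k k' with hlt | rfl | hlt
  · exact absurd heq (Nvis_lt_of_lt x hk hlt hky).ne
  · rfl
  · exact absurd heq (Nvis_lt_of_lt x hk' hlt hky').ne'

lemma visitEp_spec {x : ℕ → ℕ → S × A × B} {h i : ℕ} {y : S × A × B}
    (hpos : 1 ≤ visitEp x h y i) :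
    x (visitEp x h y i) h = y ∧ Nvis x h (visitEp x h y i) y = i - 1 :=
  Nat.sInf_mem (s := {j | x j h = y ∧ Nvis x h j y = i - 1}) (Nat.nonempty_of_pos_sInf hpos)

/-- If episode `j` is one of the visits used at episode `k`, then both episodes visit the same
triple, and episode `k` lies in the stage right after that of episode `j`. -/
lemma ellCheck_eq_imp {x : ℕ → ℕ → S × A × B} {H h k i j : ℕ} (hH : 1 ≤ H) (hj : 1 ≤ j)
    (hi : i ∈ Finset.Icc 1 (nCheck x H h k)) (hji : j = ellCheck x H h k i) :
    x k h = x j h ∧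
      curStage H (Nvis x h k (x j h)) = curStage H (Nvis x h j (x j h)) + 1 ∧
      stageEnd H (curStage H (Nvis x h j (x j h))) + i = Nvis x h j (x j h) + 1 := by
  unfold ellCheck ellCheckAt at hji
  obtain ⟨hx, hN⟩ := visitEp_spec (hji ▸ hj)
  rw [← hji] at hx hN
  rw [hx]
  simp only [nCheck, checkCnt, Finset.mem_Icc] at hi
  obtain ⟨hi1, hi2⟩ := hi
  split_ifs at hi2 with h0
  · omega
  have hend := stageEnd_succ H (curStage H (Nvis x h k (x k h)) - 1)
  have hcur : curStage H (Nvis x h j (x k h)) = curStage H (Nvis x h k (x k h)) - 1 :=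
    curStage_eq hH (by omega) (by omega)
  rw [hcur]
  exact ⟨rfl, by omega, by omega⟩

/-- The number of episodes visiting `y` within a given stage is at most the stage length. -/
lemma card_stage_le (x : ℕ → ℕ → S × A × B) {H : ℕ} (hH : 1 ≤ H) (K h m : ℕ) (y : S × A × B) :
    ((Finset.Icc 1 K).filter fun k => x k h = y ∧ curStage H (Nvis x h k y) = m).card
      ≤ stageLen H m := by
  have hcard : (Finset.Ico (stageEnd H m) (stageEnd H (m + 1))).card = stageLen H m := by
    simp [stageEnd_succ]
  rw [← hcard]
  refine Finset.card_le_card_of_injOn (fun k => Nvis x h k y) ?_ ((Nvis_injOn x h y).mono ?_)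
  · intro k hk
    simp only [Finset.coe_filter, Finset.mem_Icc, Set.mem_ofPred_eq] at hk
    obtain ⟨-, -, rfl⟩ := hk
    simpa using ⟨stageEnd_curStage_le H _, lt_stageEnd_curStage_succ hH _⟩
  · intro k hk
    simp only [Finset.coe_filter, Finset.mem_Icc, Set.mem_ofPred_eq] at hk
    exact ⟨hk.1.1, hk.2.1⟩

lemma weight_le (x : ℕ → ℕ → S × A × B) {H : ℕ} (hH : 1 ≤ H) (h k : ℕ) {j : ℕ} (hj : 1 ≤ j) :
    (nCheck x H h k : ℝ)⁻¹ *
        ∑ i ∈ Finset.Icc 1 (nCheck x H h k),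
          (if j = ellCheck x H h k i then (1 : ℝ) else 0)
      ≤ if x k h = x j h ∧
          curStage H (Nvis x h k (x j h)) = curStage H (Nvis x h j (x j h)) + 1
        then (stageLen H (curStage H (Nvis x h j (x j h))) : ℝ)⁻¹ else 0 := by
  rw [Finset.sum_boole]
  split_ifs with hc
  · have hn : nCheck x H h k = stageLen H (curStage H (Nvis x h j (x j h))) := by
      simp [nCheck, checkCnt, hc.1, hc.2]
    rw [← hn]
    refine mul_le_of_le_one_right (by positivity) ?_
    rw [Nat.cast_le_one, Finset.card_le_one]
    intro a ha b hb
    rw [Finset.mem_filter] at ha hb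
    have h1 := (ellCheck_eq_imp hH hj ha.1 ha.2).2.2
    have h2 := (ellCheck_eq_imp hH hj hb.1 hb.2).2.2
    omega
  · rw [Finset.filter_false_of_mem]
    · simp
    · intro i hi hji
      have himp := ellCheck_eq_imp hH hj hi hji
      exact hc ⟨himp.1, himp.2.1⟩

end Visits

/-- Lemma `app-lemma:sum-change`. For any step `h ∈ [H]` and any episode
`j ∈ [K]`, along any trajectory `x` of Algorithm 1,
`Σ_{k=1}^K (1/ň_h^k) Σ_{i=1}^{ň_h^k} 1{j = ℓ̌_{h,i}^k} ≤ 1 + 1/H`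
(episodes `k` whose visited triple is still in its first stage have `ň_h^k = 0` and
contribute `0`). -/
theorem statement6 {S A B : Type*} [DecidableEq S] [DecidableEq A] [DecidableEq B]
    (H K : ℕ) (hH : 1 ≤ H) (hK : 1 ≤ K)
    (x : ℕ → ℕ → S × A × B)
    (h : ℕ) (hh1 : 1 ≤ h) (hhH : h ≤ H)
    (j : ℕ) (hj1 : 1 ≤ j) (hjK : j ≤ K) :
    ∑ k ∈ Finset.Icc 1 K, (nCheck x H h k : ℝ)⁻¹ *
        ∑ i ∈ Finset.Icc 1 (nCheck x H h k),
          (if j = ellCheck x H h k i then (1 : ℝ) else 0)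
      ≤ 1 + 1 / (H : ℝ) := by
  refine (Finset.sum_le_sum fun k _ => weight_le x hH h k hj1).trans ?_
  rw [← Finset.sum_filter, Finset.sum_const, nsmul_eq_mul]
  refine le_trans ?_ (stageLen_succ_div_le hH (curStage H (Nvis x h j (x j h))))
  gcongr
  exact card_stage_le x hH K h _ _

end ZSMG
end

section
/- Let {M_n}_{n≥0} be a martingale with M₀ = 0 and |M_n − M_{n−1}| ≤ c almost surely for some c > 0 and all n ≥ 1, with respect to the filtration F_k = σ(M₁,…,M_k). Let Var_n = Σ_{k=1}^n E[(M_k − M_{k−1})² | F_{k−1}]. Then for any positive integer n and any ε, p > 0: P[ |M_n| ≥ 2√(Var_n · log(1/p)) + 2√(ε·log(1/p)) + 2c·log(1/p) ] ≤ (2nc²/ε + 2)·p. -/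
open Finset MeasureTheory

namespace ZSMG

/-- The conditional Bernstein estimate: a centered variable with `|X| ≤ c` and `l * c ≤ 1`
satisfies `E[exp (l X - l² E[X² | m]) | m] ≤ 1`, tested against a nonnegative bounded
`m`-measurable weight `W`. -/
lemma integral_mul_exp_sub_condVar_le {Ω : Type*} {m m0 : MeasurableSpace Ω} (hm : m ≤ m0)
    (P : Measure[m0] Ω) [IsProbabilityMeasure P] {W X : Ω → ℝ} {c l C : ℝ}
    (hl : 0 ≤ l) (hlc : l * c ≤ 1) (hW : StronglyMeasurable[m] W) (hW0 : ∀ ω, 0 ≤ W ω)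
    (hWC : ∀ᵐ ω ∂P, W ω ≤ C) (hX : StronglyMeasurable[m0] X) (hXc : ∀ᵐ ω ∂P, |X ω| ≤ c)
    (hX0 : P[X | m] =ᵐ[P] 0) :
    ∫ ω, W ω * Real.exp (l * X ω - l ^ 2 * (P[fun ω' => X ω' ^ 2 | m]) ω) ∂P ≤ ∫ ω, W ω ∂P := by
  have hXint : Integrable X P := Integrable.of_bound hX.aestronglyMeasurable c hXc
  have hX2int : Integrable (fun ω => X ω ^ 2) P := by
    refine Integrable.of_bound (hX.pow 2).aestronglyMeasurable (c ^ 2) ?_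
    filter_upwards [hXc] with ω h
    rw [Real.norm_of_nonneg (sq_nonneg _)]
    exact sq_le_sq' (abs_le.1 h).1 (abs_le.1 h).2
  set s : Ω → ℝ := P[fun ω' => X ω' ^ 2 | m] with hs
  have hsm : StronglyMeasurable[m] s := stronglyMeasurable_condExp
  have hs0 : 0 ≤ᵐ[P] s := condExp_nonneg (ae_of_all _ fun ω => sq_nonneg _)
  set U : Ω → ℝ := fun ω => W ω * Real.exp (-(l ^ 2 * s ω)) with hU
  have hUm : StronglyMeasurable[m] U :=
    hW.mul (Real.continuous_exp.comp_stronglyMeasurable (hsm.const_mul (l ^ 2)).neg)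
  have hU0 : ∀ ω, 0 ≤ U ω := fun ω => mul_nonneg (hW0 ω) (Real.exp_pos _).le
  have hUC : ∀ᵐ ω ∂P, ‖U ω‖ ≤ C := by
    filter_upwards [hWC, hs0] with ω h h0
    rw [Real.norm_of_nonneg (hU0 ω)]
    refine le_trans (mul_le_of_le_one_right (hW0 ω) (Real.exp_le_one_iff.2 ?_)) h
    have : 0 ≤ l ^ 2 * s ω := mul_nonneg (sq_nonneg _) h0
    linarith
  have hWint : Integrable W P := by
    refine Integrable.of_bound (hW.mono hm).aestronglyMeasurable C ?_
    filter_upwards [hWC] with ω h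
    rwa [Real.norm_of_nonneg (hW0 ω)]
  set G : Ω → ℝ := fun ω => 1 + l * X ω + l ^ 2 * X ω ^ 2 with hG
  have hGint : Integrable G P :=
    ((integrable_const 1).add (hXint.const_mul l)).add (hX2int.const_mul (l ^ 2))
  have hUG : Integrable (U * G) P :=
    hGint.bdd_mul (hUm.mono hm).aestronglyMeasurable hUC
  have hcond : P[G | m] =ᵐ[P] fun ω => 1 + l ^ 2 * s ω := by
    have h1 : P[G | m] =ᵐ[P] P[fun ω => 1 + l * X ω | m] + P[fun ω => l ^ 2 * X ω ^ 2 | m] :=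
      condExp_add ((integrable_const 1).add (hXint.const_mul l)) (hX2int.const_mul (l ^ 2)) m
    have h2 : P[fun ω => 1 + l * X ω | m] =ᵐ[P] P[fun _ => (1 : ℝ) | m] + P[fun ω => l * X ω | m] :=
      condExp_add (integrable_const 1) (hXint.const_mul l) m
    have h3 : P[fun ω => l * X ω | m] =ᵐ[P] l • P[X | m] := condExp_smul l X m
    have h4 : P[fun ω => l ^ 2 * X ω ^ 2 | m] =ᵐ[P] l ^ 2 • s :=
      condExp_smul (l ^ 2) (fun ω => X ω ^ 2) m
    have h5 : P[fun _ : Ω => (1 : ℝ) | m] = fun _ => 1 := condExp_const hm 1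
    filter_upwards [h1, h2, h3, h4, hX0] with ω e1 e2 e3 e4 e0
    rw [e1, Pi.add_apply, e2, Pi.add_apply, e3, e4, h5]
    simp [e0]
  calc ∫ ω, W ω * Real.exp (l * X ω - l ^ 2 * s ω) ∂P
      ≤ ∫ ω, (U * G) ω ∂P := by
        refine integral_mono_of_nonneg
          (ae_of_all _ fun ω => mul_nonneg (hW0 ω) (Real.exp_pos _).le) hUG ?_
        filter_upwards [hXc] with ω h
        have hlX : |l * X ω| ≤ 1 := by
          rw [abs_mul, abs_of_nonneg hl]
          exact (mul_le_mul_of_nonneg_left h hl).trans hlc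
        have := (abs_le.1 (Real.abs_exp_sub_one_sub_id_le hlX)).2
        have hexp : Real.exp (l * X ω) ≤ G ω := by simp only [hG]; nlinarith
        have : W ω * Real.exp (l * X ω - l ^ 2 * s ω) = U ω * Real.exp (l * X ω) := by
          rw [sub_eq_neg_add, Real.exp_add, mul_assoc]
        rw [Pi.mul_apply, this]
        exact mul_le_mul_of_nonneg_left hexp (hU0 ω)
    _ = ∫ ω, U ω * (1 + l ^ 2 * s ω) ∂P := by
        rw [← integral_condExp hm]
        refine integral_congr_ae ?_
        filter_upwards [condExp_mul_of_stronglyMeasurable_left hUm hUG hGint, hcond] with ω e1 e2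
        rw [e1, Pi.mul_apply, e2]
    _ ≤ ∫ ω, W ω ∂P := by
        refine integral_mono_of_nonneg ?_ hWint ?_
        · filter_upwards [hs0] with ω h
          have : 0 ≤ s ω := h
          exact mul_nonneg (hU0 ω) (by positivity)
        · refine ae_of_all _ fun ω => ?_
          have h := Real.add_one_le_exp (l ^ 2 * s ω)
          calc U ω * (1 + l ^ 2 * s ω) ≤ U ω * Real.exp (l ^ 2 * s ω) :=
                mul_le_mul_of_nonneg_left (by linarith) (hU0 ω)
            _ = W ω := by simp only [hU]; rw [mul_assoc, ← Real.exp_add]; simp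

/-- The sum of the conditional variances of the first `n` increments of `M`. -/
noncomputable def condVarSum {Ω : Type*} {m0 : MeasurableSpace Ω} (P : Measure Ω)
    (F : Filtration ℕ m0) (M : ℕ → Ω → ℝ) (n : ℕ) (ω : Ω) : ℝ :=
  ∑ k ∈ Finset.range n, (P[fun ω' => (M (k + 1) ω' - M k ω') ^ 2 | F k]) ω

section Freedman

variable {Ω : Type*} {m0 : MeasurableSpace Ω} {P : Measure Ω}
  {F : Filtration ℕ m0} {M : ℕ → Ω → ℝ} {c : ℝ}

lemma condVarSum_neg (n : ℕ) : condVarSum P F (-M) n = condVarSum P F M n := by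
  funext ω
  refine Finset.sum_congr rfl fun k _ => ?_
  congr 2
  funext ω'
  simp only [Pi.neg_apply]
  ring

lemma condVarSum_nonneg (n : ℕ) : ∀ᵐ ω ∂P, 0 ≤ condVarSum P F M n ω := by
  have h : ∀ k : ℕ, ∀ᵐ ω ∂P, 0 ≤ (P[fun ω' => (M (k + 1) ω' - M k ω') ^ 2 | F k]) ω :=
    fun k => condExp_nonneg (ae_of_all _ fun ω => sq_nonneg _)
  filter_upwards [ae_all_iff.2 h] with ω hω
  exact Finset.sum_nonneg fun k _ => hω k

lemma condVarSum_le (hbdd : ∀ n, ∀ᵐ ω ∂P, |M (n + 1) ω - M n ω| ≤ c) (n : ℕ) :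
    ∀ᵐ ω ∂P, condVarSum P F M n ω ≤ n * c ^ 2 := by
  have h : ∀ k : ℕ, ∀ᵐ ω ∂P,
      |(P[fun ω' => (M (k + 1) ω' - M k ω') ^ 2 | F k]) ω| ≤ c ^ 2 := by
    intro k
    refine ae_bdd_abs_condExp_of_ae_bdd_abs ?_
    filter_upwards [hbdd k] with ω hω
    rw [abs_of_nonneg (sq_nonneg _)]
    exact sq_le_sq' (abs_le.1 hω).1 (abs_le.1 hω).2
  filter_upwards [ae_all_iff.2 h] with ω hω
  calc condVarSum P F M n ω ≤ ∑ _k ∈ Finset.range n, c ^ 2 :=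
        Finset.sum_le_sum fun k _ =>
          (le_abs_self _).trans (hω k)
    _ = n * c ^ 2 := by simp

lemma ae_le_of_increments_le (hM0 : ∀ ω, M 0 ω = 0)
    (hbdd : ∀ n, ∀ᵐ ω ∂P, |M (n + 1) ω - M n ω| ≤ c) (n : ℕ) :
    ∀ᵐ ω ∂P, M n ω ≤ n * c := by
  filter_upwards [ae_all_iff.2 hbdd] with ω hω
  induction n with
  | zero => simp [hM0]
  | succ k ih =>
    have := (abs_le.1 (hω k)).2
    push_cast
    linarith

/-- The process `exp (l M_n - l² V_n)`, with `V` the sum of conditional variances. -/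
noncomputable def expCompensated (P : Measure Ω) (F : Filtration ℕ m0) (M : ℕ → Ω → ℝ)
    (l : ℝ) (n : ℕ) (ω : Ω) : ℝ :=
  Real.exp (l * M n ω - l ^ 2 * condVarSum P F M n ω)

lemma stronglyMeasurable_expCompensated (hM : StronglyAdapted F M) (l : ℝ) (n : ℕ) :
    StronglyMeasurable[F n] (expCompensated P F M l n) := by
  have hV : StronglyMeasurable[F n] (condVarSum P F M n) :=
    Finset.stronglyMeasurable_fun_sum _ fun k hk =>
      stronglyMeasurable_condExp.mono (F.mono (Finset.mem_range.1 hk).le)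
  exact Real.continuous_exp.comp_stronglyMeasurable
    (((hM n).const_mul l).sub (hV.const_mul (l ^ 2)))

lemma expCompensated_le (hM0 : ∀ ω, M 0 ω = 0)
    (hbdd : ∀ n, ∀ᵐ ω ∂P, |M (n + 1) ω - M n ω| ≤ c) {l : ℝ} (hl : 0 ≤ l) (n : ℕ) :
    ∀ᵐ ω ∂P, expCompensated P F M l n ω ≤ Real.exp (l * (n * c)) := by
  filter_upwards [ae_le_of_increments_le hM0 hbdd n, condVarSum_nonneg (F := F) (M := M) n]
    with ω h h0
  refine Real.exp_le_exp.2 ?_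
  have h1 := mul_le_mul_of_nonneg_left h hl
  have h2 := mul_nonneg (sq_nonneg l) h0
  linarith

lemma integral_expCompensated_le_one [IsProbabilityMeasure P] (hM : Martingale M F P)
    (hM0 : ∀ ω, M 0 ω = 0)
    (hbdd : ∀ n, ∀ᵐ ω ∂P, |M (n + 1) ω - M n ω| ≤ c) {l : ℝ} (hl : 0 ≤ l) (hlc : l * c ≤ 1)
    (n : ℕ) : ∫ ω, expCompensated P F M l n ω ∂P ≤ 1 := by
  induction n with
  | zero => simp [expCompensated, condVarSum, hM0]
  | succ k ih =>
    have hmeas : StronglyMeasurable[m0] (fun ω => M (k + 1) ω - M k ω) :=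
      StronglyMeasurable.sub ((hM.1 (k + 1)).mono (F.le _)) ((hM.1 k).mono (F.le _))
    refine le_trans (le_of_eq_of_le ?_ (integral_mul_exp_sub_condVar_le (F.le k) P hl hlc
      (stronglyMeasurable_expCompensated hM.1 l k) (fun ω => (Real.exp_pos _).le)
      (expCompensated_le hM0 hbdd hl k)
      hmeas (hbdd k) ?_)) ih
    · refine integral_congr_ae (ae_of_all _ fun ω => ?_)
      simp only [expCompensated, condVarSum, Finset.sum_range_succ]
      rw [← Real.exp_add]
      ring_nf
    · have h1 := condExp_sub (hM.integrable (k + 1)) (hM.integrable k) (F k)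
      filter_upwards [h1, hM.2 k (k + 1) k.le_succ, hM.2 k k le_rfl] with ω e1 e2 e3
      refine e1.trans ?_
      rw [Pi.sub_apply, e2, e3, sub_self, Pi.zero_apply]

/-- Freedman's inequality in exponential form. -/
lemma measure_le_exp_of_condVarSum_le [IsProbabilityMeasure P] (hM : Martingale M F P)
    (hM0 : ∀ ω, M 0 ω = 0)
    (hbdd : ∀ n, ∀ᵐ ω ∂P, |M (n + 1) ω - M n ω| ≤ c) {l : ℝ} (hl : 0 ≤ l) (hlc : l * c ≤ 1)
    (n : ℕ) (t v : ℝ) :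
    P {ω | t ≤ M n ω ∧ condVarSum P F M n ω ≤ v} ≤
      ENNReal.ofReal (Real.exp (-(l * t - l ^ 2 * v))) := by
  set a := Real.exp (l * t - l ^ 2 * v) with ha
  have hint : Integrable (expCompensated P F M l n) P := by
    refine Integrable.of_bound
      ((stronglyMeasurable_expCompensated hM.1 l n).mono (F.le n)).aestronglyMeasurable
      (Real.exp (l * (n * c))) ?_
    filter_upwards [expCompensated_le (F := F) hM0 hbdd hl n] with ω h
    exact (Real.norm_of_nonneg (Real.exp_pos _).le).trans_le h
  have hsub : {ω | t ≤ M n ω ∧ condVarSum P F M n ω ≤ v} ⊆ {ω | a ≤ expCompensated P F M l n ω} := by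
    rintro ω ⟨h1, h2⟩
    refine Real.exp_le_exp.2 ?_
    have h1 := mul_le_mul_of_nonneg_left h1 hl
    have h2 := mul_le_mul_of_nonneg_left h2 (sq_nonneg l)
    linarith
  have hmarkov := (mul_meas_ge_le_integral_of_nonneg
    (ae_of_all P fun ω => (Real.exp_pos _).le) hint a).trans
    (integral_expCompensated_le_one hM hM0 hbdd hl hlc n)
  refine (measure_mono hsub).trans ?_
  rw [← ENNReal.ofReal_toReal (measure_ne_top P _)]
  refine ENNReal.ofReal_le_ofReal ?_
  rw [Real.exp_neg, ← ha, ← one_div, le_div_iff₀' (Real.exp_pos _)]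
  exact hmarkov

lemma measure_ge_two_mul_sqrt_le [IsProbabilityMeasure P] (hM : Martingale M F P)
    (hM0 : ∀ ω, M 0 ω = 0) (hc : 0 < c)
    (hbdd : ∀ n, ∀ᵐ ω ∂P, |M (n + 1) ω - M n ω| ≤ c) (n : ℕ) {v L : ℝ} (hv : 0 < v)
    (hL : 0 ≤ L) :
    P {ω | 2 * Real.sqrt (v * L) + 2 * c * L ≤ M n ω ∧ condVarSum P F M n ω ≤ v} ≤
      ENNReal.ofReal (Real.exp (-L)) := by
  obtain ⟨l, hl, hlc, hlL⟩ : ∃ l : ℝ, 0 ≤ l ∧ l * c ≤ 1 ∧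
      L ≤ l * (2 * Real.sqrt (v * L) + 2 * c * L) - l ^ 2 * v := by
    rw [Real.sqrt_mul hv.le]
    have hx := Real.sqrt_pos.2 hv
    have hy := Real.sqrt_nonneg L
    have hxv := Real.sq_sqrt hv.le
    have hyL := Real.sq_sqrt hL
    set x := Real.sqrt v
    set y := Real.sqrt L
    rcases le_total (y * c) x with h | h
    · refine ⟨y / x, by positivity, by rw [div_mul_eq_mul_div, div_le_one hx]; exact h, ?_⟩
      have h1 : y / x * (2 * (x * y) + 2 * c * L) - (y / x) ^ 2 * v
          = L + 2 * (y / x * c * L) := by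
        rw [← hxv, ← hyL]
        field_simp
        ring
      rw [h1]
      have : 0 ≤ y / x * c * L := by positivity
      linarith
    · refine ⟨1 / c, by positivity, by rw [one_div_mul_cancel hc.ne'], ?_⟩
      have h1 : 1 / c * (2 * (x * y) + 2 * c * L) - (1 / c) ^ 2 * v
          = L + (y ^ 2 - (x / c) ^ 2) + 2 * (x * y / c) := by
        rw [← hxv, ← hyL]
        field_simp
        ring
      have h2 : x / c ≤ y := by rwa [div_le_iff₀ hc]
      have h3 : (x / c) ^ 2 ≤ y ^ 2 := pow_le_pow_left₀ (by positivity) h2 2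
      have h4 : 0 ≤ x * y / c := by positivity
      rw [h1]
      linarith
  exact (measure_le_exp_of_condVarSum_le hM hM0 hbdd hl hlc n _ v).trans
    (ENNReal.ofReal_le_ofReal (Real.exp_le_exp.2 (neg_le_neg hlL)))

lemma measure_abs_ge_two_mul_sqrt_le [IsProbabilityMeasure P] (hM : Martingale M F P)
    (hM0 : ∀ ω, M 0 ω = 0) (hc : 0 < c)
    (hbdd : ∀ n, ∀ᵐ ω ∂P, |M (n + 1) ω - M n ω| ≤ c) (n : ℕ) {v L : ℝ} (hv : 0 < v)
    (hL : 0 ≤ L) :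
    P {ω | 2 * Real.sqrt (v * L) + 2 * c * L ≤ |M n ω| ∧ condVarSum P F M n ω ≤ v} ≤
      ENNReal.ofReal (2 * Real.exp (-L)) := by
  have h1 := measure_ge_two_mul_sqrt_le hM hM0 hc hbdd n hv hL
  have h2 := measure_ge_two_mul_sqrt_le hM.neg (fun ω => by simp [hM0 ω]) hc
    (fun k => by
      filter_upwards [hbdd k] with ω hω
      rw [Pi.neg_apply, Pi.neg_apply, Pi.neg_apply, Pi.neg_apply, ← neg_sub', abs_neg]
      exact hω) n hv hL
  rw [condVarSum_neg] at h2
  rw [two_mul (Real.exp _), ENNReal.ofReal_add (Real.exp_pos _).le (Real.exp_pos _).le]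
  refine (measure_mono ?_).trans ((measure_union_le _ _).trans (add_le_add h1 h2))
  rintro ω ⟨ha, hV⟩
  rcases le_abs.1 ha with h | h
  · exact Or.inl ⟨h, hV⟩
  · exact Or.inr ⟨h, hV⟩

/-- Freedman's inequality with the random threshold `V_n`, obtained by splitting the range
`[0, n c²]` of `V_n` into cells of length `ε`. -/
lemma measure_abs_ge_sqrt_condVarSum_le [IsProbabilityMeasure P] (hM : Martingale M F P)
    (hM0 : ∀ ω, M 0 ω = 0) (hc : 0 < c)
    (hbdd : ∀ n, ∀ᵐ ω ∂P, |M (n + 1) ω - M n ω| ≤ c) (n : ℕ) {ε L : ℝ} (hε : 0 < ε)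
    (hL : 0 ≤ L) :
    P {ω | 2 * Real.sqrt (condVarSum P F M n ω * L) + 2 * Real.sqrt (ε * L) + 2 * c * L
        ≤ |M n ω|} ≤ ENNReal.ofReal ((2 * n * c ^ 2 / ε + 2) * Real.exp (-L)) := by
  set N := ⌊n * c ^ 2 / ε⌋₊ with hN
  have hcover : ∀ᵐ ω ∂P,
      ω ∈ {ω | 2 * Real.sqrt (condVarSum P F M n ω * L) + 2 * Real.sqrt (ε * L) + 2 * c * L
        ≤ |M n ω|} →
      ω ∈ ⋃ i ∈ Finset.range (N + 1), {ω | 2 * Real.sqrt ((i + 1 : ℝ) * ε * L) + 2 * c * L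
        ≤ |M n ω| ∧ condVarSum P F M n ω ≤ (i + 1 : ℝ) * ε} := by
    filter_upwards [condVarSum_nonneg (F := F) (M := M) n, condVarSum_le (F := F) hbdd n]
      with ω h0 h1 hω
    set V := condVarSum P F M n ω
    have hω : 2 * Real.sqrt (V * L) + 2 * Real.sqrt (ε * L) + 2 * c * L ≤ |M n ω| := hω
    simp only [Set.mem_iUnion]
    refine ⟨⌊V / ε⌋₊, Finset.mem_range_succ_iff.2 (Nat.floor_le_floor (by gcongr)), ?_, ?_⟩
    · have hle : (⌊V / ε⌋₊ : ℝ) * ε ≤ V :=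
        (le_div_iff₀ hε).1 (Nat.floor_le (div_nonneg h0 hε.le))
      have hsqrt : Real.sqrt (((⌊V / ε⌋₊ : ℝ) + 1) * ε * L) ≤
          Real.sqrt (V * L) + Real.sqrt (ε * L) := by
        have hVL : 0 ≤ V * L := mul_nonneg h0 hL
        have hεL : 0 ≤ ε * L := mul_nonneg hε.le hL
        refine Real.sqrt_le_iff.2 ⟨by positivity, ?_⟩
        have hcross : 0 ≤ Real.sqrt (V * L) * Real.sqrt (ε * L) := by positivity
        rw [add_sq, Real.sq_sqrt hVL, Real.sq_sqrt hεL]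
        have := mul_le_mul_of_nonneg_right hle hL
        linarith
      linarith
    · exact ((div_lt_iff₀ hε).1 (Nat.lt_floor_add_one _)).le
  have hNle : (N : ℝ) ≤ n * c ^ 2 / ε := Nat.floor_le (by positivity)
  calc P _ ≤ P (⋃ i ∈ Finset.range (N + 1), {ω | 2 * Real.sqrt ((i + 1 : ℝ) * ε * L) + 2 * c * L
        ≤ |M n ω| ∧ condVarSum P F M n ω ≤ (i + 1 : ℝ) * ε}) := measure_mono_ae hcover
    _ ≤ ∑ _i ∈ Finset.range (N + 1), ENNReal.ofReal (2 * Real.exp (-L)) :=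
        (measure_biUnion_finset_le _ _).trans (Finset.sum_le_sum fun i _ =>
          measure_abs_ge_two_mul_sqrt_le hM hM0 hc hbdd n (by positivity) hL)
    _ = ENNReal.ofReal (((N + 1 : ℕ) : ℝ) * (2 * Real.exp (-L))) := by
        rw [Finset.sum_const, Finset.card_range, nsmul_eq_mul,
          ENNReal.ofReal_mul (Nat.cast_nonneg _), ENNReal.ofReal_natCast]
    _ ≤ ENNReal.ofReal ((2 * n * c ^ 2 / ε + 2) * Real.exp (-L)) := by
        refine ENNReal.ofReal_le_ofReal ?_
        rw [← mul_assoc]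
        refine mul_le_mul_of_nonneg_right ?_ (Real.exp_pos _).le
        push_cast
        have : 2 * n * c ^ 2 / ε = 2 * (n * c ^ 2 / ε) := by ring
        linarith

end Freedman

/-- Lemma 10 of Zhang–Zhou–Ji.  Let `M` be a martingale with `M₀ = 0` and
increments bounded by `c`, with respect to its natural filtration `F_k = σ(M₀,…,M_k)`
(which agrees with `σ(M₁,…,M_k)` since `M₀ = 0`).  Let
`Var_n = Σ_{k=1}^n E[(M_k - M_{k-1})² | F_{k-1}]`.  Then for any `n ≥ 1` and `ε, p > 0`,
`P[|M_n| ≥ 2√(Var_n log(1/p)) + 2√(ε log(1/p)) + 2c log(1/p)] ≤ (2nc²/ε + 2) p`. -/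
theorem statement13 {Ω : Type*} [m0 : MeasurableSpace Ω]
    (P : Measure Ω) [IsProbabilityMeasure P]
    (M : ℕ → Ω → ℝ) (hmeas : ∀ n, StronglyMeasurable (M n))
    (hmart : Martingale M (Filtration.natural M hmeas) P)
    (hM0 : ∀ ω, M 0 ω = 0)
    (c : ℝ) (hc : 0 < c)
    (hbdd : ∀ n, 1 ≤ n → ∀ᵐ ω ∂P, |M n ω - M (n - 1) ω| ≤ c)
    (n : ℕ) (hn : 1 ≤ n) (ε p : ℝ) (hε : 0 < ε) (hp : 0 < p) :
    P {ω | 2 * Real.sqrt ((∑ k ∈ Finset.Icc 1 n,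
            (P[(fun ω' => (M k ω' - M (k - 1) ω') ^ 2)|
                (Filtration.natural M hmeas) (k - 1)]) ω) * Real.log (1 / p)) +
          2 * Real.sqrt (ε * Real.log (1 / p)) + 2 * c * Real.log (1 / p) ≤ |M n ω|}
      ≤ ENNReal.ofReal ((2 * n * c ^ 2 / ε + 2) * p) := by
  rcases le_or_gt 1 p with h1 | h1
  · refine prob_le_one.trans (ENNReal.one_le_ofReal.2 ?_)
    have : 0 ≤ 2 * n * c ^ 2 / ε := by positivity
    nlinarith
  have hsum : ∀ (j : ℕ) (ω : Ω), ∑ k ∈ Finset.Icc 1 j,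
      (P[(fun ω' => (M k ω' - M (k - 1) ω') ^ 2)|(Filtration.natural M hmeas) (k - 1)]) ω
        = condVarSum P (Filtration.natural M hmeas) M j ω := by
    intro j ω
    induction j with
    | zero => simp [condVarSum]
    | succ i ih =>
      rw [Finset.sum_Icc_succ_top (by omega), ih, condVarSum, condVarSum, Finset.sum_range_succ]
      rfl
  have hexp : Real.exp (-Real.log (1 / p)) = p := by
    rw [one_div, Real.log_inv, neg_neg, Real.exp_log hp]
  have h := measure_abs_ge_sqrt_condVarSum_le hmart hM0 hc (fun k => hbdd (k + 1) k.succ_pos) n hε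
    (Real.log_nonneg (one_le_one_div hp h1.le))
  rw [hexp] at h
  simp only [hsum]
  exact h

end ZSMG
end

section
/- For any α ∈ (0,1) and any nonnegative weights {w_h(s,a,b)}, the trajectory of Algorithm 1 satisfies: (i) Σ_{k=1}^K Σ_{h=1}^H w_h(s_h^k,a_h^k,b_h^k)/(n_h^k)^α ≤ (2^α/(1−α)) Σ_{s,a,b,h} w_h(s,a,b)(N_h^{K+1}(s,a,b))^{1−α}, and (ii) Σ_{k=1}^K Σ_{h=1}^H w_h(s_h^k,a_h^k,b_h^k)/(ň_h^k)^α ≤ (2^{2α}H^α/(1−α)) Σ_{s,a,b,h} w_h(s,a,b)(N_h^{K+1}(s,a,b))^{1−α}; moreover, for α = 1: Σ_{k=1}^K Σ_{h=1}^H w_h(s_h^k,a_h^k,b_h^k)/n_h^k ≤ 2 Σ_{s,a,b,h} w_h(s,a,b)·log(N_h^{K+1}(s,a,b)) and Σ_{k=1}^K Σ_{h=1}^H w_h(s_h^k,a_h^k,b_h^k)/ň_h^k ≤ 4H Σ_{s,a,b,h} w_h(s,a,b)·log(N_h^{K+1}(s,a,b)). (Terms with n_h^k = 0 or ň_h^k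 = 0 are excluded from the left-hand sums.) -/
open Finset MeasureTheory

namespace ZSMG

lemma stageEnd_zero (H : ℕ) : stageEnd H 0 = 0 := by simp [stageEnd]

lemma stageEnd_pos {H m : ℕ} (hH : 1 ≤ H) (hm : m ≠ 0) : 0 < stageEnd H m :=
  (Nat.pos_of_ne_zero hm).trans_le (le_stageEnd hH m)

lemma globCnt_le (H n : ℕ) : globCnt H n ≤ n := by
  unfold globCnt
  rcases hm : curStage H n with _ | m
  · simp [stageEnd_zero]
  · have h : m ∉ {m | n < stageEnd H (m + 1)} :=
      Nat.notMem_of_lt_sInf (by change m < curStage H n; omega)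
    simpa using h

lemma globCnt_zero (H : ℕ) : globCnt H 0 = 0 := Nat.le_zero.mp (globCnt_le H 0)

/-- The current stage is the same for all visit counts between `globCnt H n` and `n`. -/
lemma globCnt_eq_of_mem {H n t : ℕ} (hH : 1 ≤ H) (ht : globCnt H n ≤ t) (htn : t ≤ n) :
    globCnt H t = globCnt H n := by
  have h₁ : curStage H t ≤ curStage H n :=
    Nat.sInf_le (htn.trans_lt (lt_stageEnd_curStage_succ hH n))
  have h₂ : curStage H n ≤ curStage H t := by
    by_contra! h
    exact absurd (lt_stageEnd_curStage_succ hH t)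
      (not_lt.mpr ((stageEnd_mono H (Nat.succ_le_of_lt h)).trans ht))
  unfold globCnt
  rw [le_antisymm h₁ h₂]

lemma stageLen_succ_le_stageEnd (H m : ℕ) (hH : 1 ≤ H) :
    stageLen H (m + 1) ≤ stageEnd H (m + 1) + 1 := by
  induction m with
  | zero => simp [stageEnd_succ, stageEnd_zero, stageLen, Nat.div_self hH]
  | succ m ih =>
    rw [stageEnd_succ, stageLen]
    have := Nat.div_le_self (stageLen H (m + 1)) H
    omega

/-- Visit counts in the current stage are at most twice the count of completed stages. -/
lemma le_two_mul_globCnt {H n : ℕ} (hH : 1 ≤ H) (hn : globCnt H n ≠ 0) :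
    n ≤ 2 * globCnt H n := by
  have h := lt_stageEnd_curStage_succ hH n
  unfold globCnt at *
  rcases hm : curStage H n with _ | m
  · simp [hm, stageEnd_zero] at hn
  · rw [hm, stageEnd_succ] at h
    have := stageLen_succ_le_stageEnd H m hH
    omega

lemma globCnt_pos {H n : ℕ} (hH : 1 ≤ H) (hn : curStage H n ≠ 0) : 0 < globCnt H n :=
  stageEnd_pos hH hn

lemma stageEnd_succ_le_mul_stageLen {H : ℕ} (hH : 1 ≤ H) (m : ℕ) :
    stageEnd H (m + 1) ≤ 2 * H * stageLen H m := by
  induction m with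
  | zero =>
    rw [stageEnd_succ, stageEnd_zero, stageLen]
    nlinarith
  | succ m ih =>
    rw [stageEnd_succ, stageLen]
    have hq : 1 ≤ stageLen H m / H := (Nat.one_le_div_iff hH).mpr (le_stageLen H m)
    have he : stageLen H m < H * (stageLen H m / H + 1) := Nat.lt_mul_div_succ _ hH
    generalize stageLen H m / H = q at *
    obtain ⟨a, rfl⟩ := Nat.exists_eq_add_of_le hH
    obtain ⟨b, rfl⟩ := Nat.exists_eq_add_of_le hq
    nlinarith [Nat.zero_le (a * b)]

lemma globCnt_le_mul_checkCnt {H n : ℕ} (hH : 1 ≤ H) : globCnt H n ≤ 2 * H * checkCnt H n := by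
  unfold globCnt checkCnt
  rcases curStage H n with _ | m
  · simp [stageEnd_zero]
  · simpa using stageEnd_succ_le_mul_stageLen hH m

/-! ## Sums over the visits to a fixed triple -/

lemma rpow_neg_le_sub_rpow {α : ℝ} (hα0 : 0 < α) (hα1 : α < 1) (n : ℕ) :
    1 / ((n + 1 : ℕ) : ℝ) ^ α ≤
      (((n + 1 : ℕ) : ℝ) ^ (1 - α) - (n : ℝ) ^ (1 - α)) / (1 - α) := by
  have hx : (0 : ℝ) < (n : ℝ) + 1 := by positivity
  have hfac : (n : ℝ) = (n + 1) * (1 + -1 / ((n : ℝ) + 1)) := by field_simp; ring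
  have hs : -1 ≤ -1 / ((n : ℝ) + 1) := by
    rw [le_div_iff₀ hx]
    linarith [Nat.cast_nonneg (α := ℝ) n]
  have hb := rpow_one_add_le_one_add_mul_self hs (p := 1 - α) (by linarith) (by linarith)
  have hn : (n : ℝ) ^ (1 - α) ≤ ((n : ℝ) + 1) ^ (1 - α) * (1 + (1 - α) * (-1 / ((n : ℝ) + 1))) := by
    conv_lhs => rw [hfac]
    rw [Real.mul_rpow hx.le (by linarith)]
    exact mul_le_mul_of_nonneg_left hb (by positivity)
  have hpow : ((n : ℝ) + 1) ^ (1 - α) / ((n : ℝ) + 1) = 1 / ((n : ℝ) + 1) ^ α := by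
    rw [Real.rpow_sub hx, Real.rpow_one]
    field_simp
  push_cast
  rw [le_div_iff₀ (by linarith), ← hpow]
  calc _ = ((n : ℝ) + 1) ^ (1 - α) -
        ((n : ℝ) + 1) ^ (1 - α) * (1 + (1 - α) * (-1 / ((n : ℝ) + 1))) := by ring
    _ ≤ _ := by linarith

lemma one_div_globCnt_rpow_le {H : ℕ} (hH : 1 ≤ H) {α : ℝ} (hα0 : 0 < α) (n : ℕ) :
    1 / (globCnt H n : ℝ) ^ α ≤ (2 : ℝ) ^ α * (1 / (n : ℝ) ^ α) := by
  rcases Nat.eq_zero_or_pos (globCnt H n) with h | h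
  · rw [h, Nat.cast_zero, Real.zero_rpow hα0.ne', div_zero]
    positivity
  · have hn : (0 : ℝ) < n := by exact_mod_cast h.trans_le (globCnt_le H n)
    have hle : (n : ℝ) ≤ 2 * globCnt H n := by exact_mod_cast le_two_mul_globCnt hH h.ne'
    have hg : (0 : ℝ) < globCnt H n := by exact_mod_cast h
    have hpow := Real.rpow_le_rpow hn.le hle hα0.le
    rw [Real.mul_rpow (by norm_num) hg.le] at hpow
    rw [mul_one_div, div_le_div_iff₀ (by positivity) (by positivity), one_mul]
    exact hpow

lemma sum_one_div_globCnt_rpow_le {H : ℕ} (hH : 1 ≤ H) {α : ℝ} (hα0 : 0 < α) (hα1 : α < 1)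
    (n : ℕ) :
    ∑ t ∈ range n, 1 / (globCnt H t : ℝ) ^ α ≤ (2 : ℝ) ^ α / (1 - α) * (n : ℝ) ^ (1 - α) := by
  have hα : 0 < 1 - α := by linarith
  have shifted : ∀ m : ℕ, ∑ t ∈ range (m + 1), 1 / (globCnt H t : ℝ) ^ α ≤
      (2 : ℝ) ^ α / (1 - α) * (m : ℝ) ^ (1 - α) := by
    intro m
    induction m with
    | zero => simp [globCnt_zero, Real.zero_rpow hα0.ne', Real.zero_rpow hα.ne']
    | succ m ih =>
      rw [Finset.sum_range_succ]
      have h := (one_div_globCnt_rpow_le hH hα0 (m + 1)).trans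
        (mul_le_mul_of_nonneg_left (rpow_neg_le_sub_rpow hα0 hα1 m) (by positivity))
      calc _ ≤ _ := add_le_add ih h
        _ = _ := by ring
  rcases n with _ | m
  · simp [Real.zero_rpow hα.ne']
  · refine (shifted m).trans ?_
    gcongr
    simp

lemma sub_one_le_two_mul_log {x : ℝ} (h₁ : 1 ≤ x) (h₃ : x ≤ 3) : x - 1 ≤ 2 * Real.log x := by
  have hconv := convexOn_exp.2 (Set.mem_univ (0 : ℝ)) (Set.mem_univ (1 : ℝ))
    (show 0 ≤ 1 - (x - 1) / 2 by linarith) (show 0 ≤ (x - 1) / 2 by linarith) (by ring)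
  simp only [smul_eq_mul, mul_zero, mul_one, zero_add, Real.exp_zero] at hconv
  have hexp : Real.exp ((x - 1) / 2) ≤ x := by
    nlinarith [Real.exp_one_lt_d9]
  have := (Real.le_log_iff_exp_le (by linarith)).mpr hexp
  linarith

lemma sum_one_div_globCnt_le {H : ℕ} (hH : 1 ≤ H) (n : ℕ) :
    ∑ t ∈ range n, 1 / (globCnt H t : ℝ) ≤ 2 * Real.log n := by
  induction n using Nat.strong_induction_on with
  | _ n ih =>
    rcases n with _ | n
    · simp
    have hgn := globCnt_le H n
    have hsplit : ∑ t ∈ range (n + 1), 1 / (globCnt H t : ℝ) =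
        ∑ t ∈ range (globCnt H n), 1 / (globCnt H t : ℝ) +
          (((n + 1 : ℕ) : ℝ) - globCnt H n) / (globCnt H n : ℝ) := by
      rw [← Finset.sum_range_add_sum_Ico _ (show globCnt H n ≤ n + 1 by omega)]
      congr 1
      rw [Finset.sum_congr rfl (g := fun _ => 1 / (globCnt H n : ℝ))]
      · rw [Finset.sum_const, Nat.card_Ico, nsmul_eq_mul, Nat.cast_sub (by omega), mul_one_div]
      · intro t ht
        rw [Finset.mem_Ico] at ht
        rw [globCnt_eq_of_mem hH ht.1 (by omega)]
    rw [hsplit]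
    have hrec := ih (globCnt H n) (by omega)
    rcases Nat.eq_zero_or_pos (globCnt H n) with h | h
    · simp only [h, range_zero, sum_empty, Nat.cast_zero, div_zero, add_zero]
      exact mul_nonneg zero_le_two (Real.log_natCast_nonneg _)
    · have hg : (0 : ℝ) < globCnt H n := by exact_mod_cast h
      have h2 := le_two_mul_globCnt hH h.ne'
      have hle : (globCnt H n : ℝ) ≤ (n + 1 : ℕ) := by exact_mod_cast hgn.trans n.le_succ
      have hle3 : ((n + 1 : ℕ) : ℝ) ≤ 3 * globCnt H n := by
        exact_mod_cast (show n + 1 ≤ 3 * globCnt H n by omega)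
      have hlog := sub_one_le_two_mul_log ((one_le_div hg).mpr hle) ((div_le_iff₀ hg).mpr hle3)
      rw [Real.log_div (hg.trans_le hle).ne' hg.ne'] at hlog
      rw [sub_div, div_self hg.ne']
      linarith

lemma one_div_checkCnt_rpow_le {H : ℕ} (hH : 1 ≤ H) {α : ℝ} (hα0 : 0 < α) (n : ℕ) :
    1 / (checkCnt H n : ℝ) ^ α ≤ (2 * H : ℝ) ^ α * (1 / (globCnt H n : ℝ) ^ α) := by
  by_cases hm : curStage H n = 0
  · simp only [checkCnt, hm, if_true, Nat.cast_zero, Real.zero_rpow hα0.ne', div_zero]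
    positivity
  · have hg : (0 : ℝ) < globCnt H n := by exact_mod_cast globCnt_pos hH hm
    have hle : (globCnt H n : ℝ) ≤ 2 * H * checkCnt H n := by
      exact_mod_cast globCnt_le_mul_checkCnt hH
    have hc : (0 : ℝ) < checkCnt H n :=
      pos_of_mul_pos_right (hg.trans_le hle) (by positivity)
    have hpow := Real.rpow_le_rpow hg.le hle hα0.le
    rw [Real.mul_rpow (by positivity) hc.le] at hpow
    rw [mul_one_div, div_le_div_iff₀ (by positivity) (by positivity), one_mul]
    exact hpow

lemma sum_one_div_checkCnt_rpow_le {H : ℕ} (hH : 1 ≤ H) {α : ℝ} (hα0 : 0 < α) (hα1 : α < 1)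
    (n : ℕ) :
    ∑ t ∈ range n, 1 / (checkCnt H t : ℝ) ^ α ≤
      (2 : ℝ) ^ (2 * α) * (H : ℝ) ^ α / (1 - α) * (n : ℝ) ^ (1 - α) := by
  calc ∑ t ∈ range n, 1 / (checkCnt H t : ℝ) ^ α
      ≤ ∑ t ∈ range n, (2 * H : ℝ) ^ α * (1 / (globCnt H t : ℝ) ^ α) :=
        Finset.sum_le_sum fun t _ => one_div_checkCnt_rpow_le hH hα0 t
    _ ≤ (2 * H : ℝ) ^ α * ((2 : ℝ) ^ α / (1 - α) * (n : ℝ) ^ (1 - α)) := by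
        rw [← Finset.mul_sum]
        exact mul_le_mul_of_nonneg_left (sum_one_div_globCnt_rpow_le hH hα0 hα1 n) (by positivity)
    _ = _ := by
        rw [Real.mul_rpow zero_le_two (Nat.cast_nonneg H), two_mul α,
          Real.rpow_add zero_lt_two]
        ring

lemma sum_one_div_checkCnt_le {H : ℕ} (hH : 1 ≤ H) (n : ℕ) :
    ∑ t ∈ range n, 1 / (checkCnt H t : ℝ) ≤ 4 * (H : ℝ) * Real.log n := by
  calc ∑ t ∈ range n, 1 / (checkCnt H t : ℝ)
      ≤ ∑ t ∈ range n, (2 * H : ℝ) * (1 / (globCnt H t : ℝ)) :=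
        Finset.sum_le_sum fun t _ => by
          simpa only [Real.rpow_one] using one_div_checkCnt_rpow_le hH one_pos t
    _ ≤ (2 * H : ℝ) * (2 * Real.log n) := by
        rw [← Finset.mul_sum]
        exact mul_le_mul_of_nonneg_left (sum_one_div_globCnt_le hH n) (by positivity)
    _ = _ := by ring

/-! ## Regrouping the episodes by the visited triple -/

section Regroup

variable {S A B : Type*} [DecidableEq S] [DecidableEq A] [DecidableEq B]

lemma Nvis_succ (x : ℕ → ℕ → S × A × B) (h k : ℕ) (y : S × A × B) (hk : 1 ≤ k) :
    Nvis x h (k + 1) y = Nvis x h k y + if x k h = y then 1 else 0 := by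
  unfold Nvis
  rw [← Finset.insert_Ico_right_eq_Ico_add_one hk, Finset.filter_insert]
  split_ifs
  · rw [Finset.card_insert_of_notMem (by simp)]
  · rfl

variable [Fintype S] [Fintype A] [Fintype B]

lemma sum_episodes_eq_sum_visits (x : ℕ → ℕ → S × A × B) (h K : ℕ) (g : S × A × B → ℕ → ℝ) :
    ∑ k ∈ Icc 1 K, g (x k h) (Nvis x h k (x k h)) =
      ∑ y, ∑ t ∈ range (Nvis x h (K + 1) y), g y t := by
  induction K with
  | zero => simp [Nvis]
  | succ K ih =>
    rw [Finset.sum_Icc_succ_top (by omega), ih]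
    have hstep : ∀ y, ∑ t ∈ range (Nvis x h (K + 1 + 1) y), g y t =
        ∑ t ∈ range (Nvis x h (K + 1) y), g y t +
          if x (K + 1) h = y then g y (Nvis x h (K + 1) y) else 0 := by
      intro y
      rw [Nvis_succ x h (K + 1) y (by omega)]
      split_ifs
      · rw [Finset.sum_range_succ]
      · simp
    simp only [hstep, Finset.sum_add_distrib, Finset.sum_ite_eq, Finset.mem_univ, if_true]

/-- A bound on the sum of `g` over the first `n` visits to a triple, for every `n`, yields the
weighted bound along the trajectory. -/
lemma weighted_sum_episodes_le (x : ℕ → ℕ → S × A × B) (H K : ℕ) (w : ℕ → S × A × B → ℝ)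
    (hw : ∀ h y, 0 ≤ w h y) (g F : ℕ → ℝ) (C : ℝ)
    (hg : ∀ n, ∑ t ∈ range n, 1 / g t ≤ C * F n) :
    ∑ k ∈ Icc 1 K, ∑ h ∈ Icc 1 H, w h (x k h) / g (Nvis x h k (x k h)) ≤
      C * ∑ y, ∑ h ∈ Icc 1 H, w h y * F (Nvis x h (K + 1) y) := by
  rw [Finset.sum_comm, Finset.sum_comm (s := univ), Finset.mul_sum]
  refine Finset.sum_le_sum fun h _ => ?_
  rw [sum_episodes_eq_sum_visits x h K fun y t => w h y / g t, Finset.mul_sum]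
  refine Finset.sum_le_sum fun y _ => ?_
  calc ∑ t ∈ range (Nvis x h (K + 1) y), w h y / g t
      = w h y * ∑ t ∈ range (Nvis x h (K + 1) y), 1 / g t := by
        rw [Finset.mul_sum]
        exact Finset.sum_congr rfl fun t _ => by rw [mul_one_div]
    _ ≤ w h y * (C * F (Nvis x h (K + 1) y)) := mul_le_mul_of_nonneg_left (hg _) (hw h y)
    _ = _ := by ring

end Regroup

/-- variant of Lemma 11 of Zhang–Zhou–Ji. Weighted pigeonhole bounds for
the stage-based counts `n_h^k` and `ň_h^k` along any trajectory of Algorithm 1, for any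
`α ∈ (0,1)` and for `α = 1`.  Terms with `n_h^k = 0` (resp. `ň_h^k = 0`) vanish, since in
Lean `w / 0 = 0` and `0 ^ α = 0` for `α > 0`. `Nvis x h (K+1) y = N_h^{K+1}(y)` is the total
number of visits to `y` at step `h` after all `K` episodes. -/
theorem statement14 {S A B : Type*} [Fintype S] [Fintype A] [Fintype B]
    [DecidableEq S] [DecidableEq A] [DecidableEq B]
    (H K : ℕ) (hH : 1 ≤ H) (hK : 1 ≤ K)
    (x : ℕ → ℕ → S × A × B)
    (w : ℕ → S × A × B → ℝ) (hw : ∀ h y, 0 ≤ w h y)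
    (α : ℝ) (hα0 : 0 < α) (hα1 : α < 1) :
    (∑ k ∈ Finset.Icc 1 K, ∑ h ∈ Finset.Icc 1 H, w h (x k h) / (nGlob x H h k : ℝ) ^ α
        ≤ (2 : ℝ) ^ α / (1 - α) *
          ∑ y : S × A × B, ∑ h ∈ Finset.Icc 1 H, w h y * (Nvis x h (K + 1) y : ℝ) ^ (1 - α)) ∧
    (∑ k ∈ Finset.Icc 1 K, ∑ h ∈ Finset.Icc 1 H, w h (x k h) / (nCheck x H h k : ℝ) ^ α
        ≤ (2 : ℝ) ^ (2 * α) * (H : ℝ) ^ α / (1 - α) *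
          ∑ y : S × A × B, ∑ h ∈ Finset.Icc 1 H, w h y * (Nvis x h (K + 1) y : ℝ) ^ (1 - α)) ∧
    (∑ k ∈ Finset.Icc 1 K, ∑ h ∈ Finset.Icc 1 H, w h (x k h) / (nGlob x H h k : ℝ)
        ≤ 2 * ∑ y : S × A × B, ∑ h ∈ Finset.Icc 1 H,
            w h y * Real.log (Nvis x h (K + 1) y)) ∧
    (∑ k ∈ Finset.Icc 1 K, ∑ h ∈ Finset.Icc 1 H, w h (x k h) / (nCheck x H h k : ℝ)
        ≤ 4 * (H : ℝ) * ∑ y : S × A × B, ∑ h ∈ Finset.Icc 1 H,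
            w h y * Real.log (Nvis x h (K + 1) y)) := by
  exact ⟨weighted_sum_episodes_le x H K w hw (fun t => (globCnt H t : ℝ) ^ α)
      (fun n => (n : ℝ) ^ (1 - α)) _ (sum_one_div_globCnt_rpow_le hH hα0 hα1),
    weighted_sum_episodes_le x H K w hw (fun t => (checkCnt H t : ℝ) ^ α)
      (fun n => (n : ℝ) ^ (1 - α)) _ (sum_one_div_checkCnt_rpow_le hH hα0 hα1),
    weighted_sum_episodes_le x H K w hw (fun t => (globCnt H t : ℝ))
      (fun n => Real.log n) _ (sum_one_div_globCnt_le hH),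
    weighted_sum_episodes_le x H K w hw (fun t => (checkCnt H t : ℝ))
      (fun n => Real.log n) _ (sum_one_div_checkCnt_le hH)⟩

end ZSMG
end
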